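/- (Proposition 3.6, full Euler case.) Let (ρ,u,s) be a classical solution of the full compressible Euler equations on ℝⁿ × [0,T] satisfying the decay, integrability and entropy conditions, and set J(0) = G(0) − F(0) + E(0). If 1 < γ ≤ 1 + 2/n, then for all t ∈ [0,T] the internal energy satisfies E_i(t) ≤ J(0)/(t+1)^{n(γ−1)}; if γ > 1 + 2/n, then E_i(t) ≤ J(0)/(t+1)² for all t ∈ [0,T]. -/

import Mathlib

open MeasureTheory Filter
open scoped InnerProductSpace

noncomputable section

/-- A classical solution of the full compressible Euler equations for a polytropic gas
with pressure `p = exp(s/c_ν) ρ^γ`: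
`∂ₜρ + div(ρu) = 0`, `∂ₜ(ρuᵢ) + div(ρuᵢu) + ∂ᵢp = 0`,
`∂ₜ((1/2)ρ|u|² + p/(γ−1)) + div(((1/2)ρ|u|² + γp/(γ−1))u) = 0` on `ℝⁿ × [0,T]`,
together with the decay conditions (9-25), the entropy lower bound `s ≥ s₁`, the
integrability conditions on the physical quantities, and differentiability of these
quantities with derivatives computed by differentiating under the integral sign. -/
structure FullEulerSolution (n : ℕ) (γ cν s₁ T : ℝ) where
  ρ : ℝ → EuclideanSpace ℝ (Fin n) → ℝ
  u : ℝ → EuclideanSpace ℝ (Fin n) → EuclideanSpace ℝ (Fin n)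
  s : ℝ → EuclideanSpace ℝ (Fin n) → ℝ
  ρ_nonneg : ∀ t ∈ Set.Icc 0 T, ∀ x, 0 ≤ ρ t x
  /-- the entropy condition: `s(x,t) ≥ s₁ = min_x s(x,0)`. -/
  entropy_lb : ∀ t ∈ Set.Icc 0 T, ∀ x, s₁ ≤ s t x
  smooth_ρ : ContDiffOn ℝ 1 (fun p : ℝ × EuclideanSpace ℝ (Fin n) => ρ p.1 p.2)
    (Set.Icc 0 T ×ˢ Set.univ)
  smooth_u : ContDiffOn ℝ 1 (fun p : ℝ × EuclideanSpace ℝ (Fin n) => u p.1 p.2)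
    (Set.Icc 0 T ×ˢ Set.univ)
  smooth_s : ContDiffOn ℝ 1 (fun p : ℝ × EuclideanSpace ℝ (Fin n) => s p.1 p.2)
    (Set.Icc 0 T ×ˢ Set.univ)
  /-- Conservation of mass: `∂ₜρ + div(ρu) = 0`. -/
  mass_eq : ∀ t ∈ Set.Icc 0 T, ∀ x,
    deriv (fun τ => ρ τ x) t
      + ∑ i : Fin n, fderiv ℝ (fun y => ρ t y * u t y i) x (EuclideanSpace.single i 1) = 0
  /-- Conservation of momentum: `∂ₜ(ρuᵢ) + div(ρuᵢu) + ∂ᵢp = 0`. -/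
  momentum_eq : ∀ t ∈ Set.Icc 0 T, ∀ x, ∀ i : Fin n,
    deriv (fun τ => ρ τ x * u τ x i) t
      + ∑ j : Fin n, fderiv ℝ (fun y => ρ t y * u t y i * u t y j) x (EuclideanSpace.single j 1)
      + fderiv ℝ (fun y => Real.exp (s t y / cν) * ρ t y ^ γ) x (EuclideanSpace.single i 1)
      = 0
  /-- Conservation of energy:
  `∂ₜ((1/2)ρ|u|² + p/(γ−1)) + div(((1/2)ρ|u|² + γp/(γ−1))u) = 0`. -/
  energy_eq : ∀ t ∈ Set.Icc 0 T, ∀ x,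
    deriv (fun τ => (1 / 2 : ℝ) * ρ τ x * ‖u τ x‖ ^ 2
        + Real.exp (s τ x / cν) * ρ τ x ^ γ / (γ - 1)) t
      + ∑ i : Fin n, fderiv ℝ (fun y => ((1 / 2 : ℝ) * ρ t y * ‖u t y‖ ^ 2
          + γ * (Real.exp (s t y / cν) * ρ t y ^ γ) / (γ - 1)) * u t y i) x
          (EuclideanSpace.single i 1) = 0
  /-- decay: `|u| → 0` as `|x| → ∞`. -/
  decay_u : ∀ t ∈ Set.Icc 0 T,
    Tendsto (fun x => ‖u t x‖) (Bornology.cobounded _) (nhds 0)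
  /-- decay: `ρ|u| = o(|x|^{-(n+1)})`. -/
  decay_ρu : ∀ t ∈ Set.Icc 0 T,
    Tendsto (fun x => ‖x‖ ^ (n + 1) * (ρ t x * ‖u t x‖)) (Bornology.cobounded _) (nhds 0)
  /-- decay: `|∇ₓu| = o(|x|^{-n})`. -/
  decay_gradu : ∀ t ∈ Set.Icc 0 T,
    Tendsto (fun x => ‖x‖ ^ n * ‖fderiv ℝ (u t) x‖) (Bornology.cobounded _) (nhds 0)
  /-- decay: the pressure `p = o(|x|^{-n})`. -/
  decay_p : ∀ t ∈ Set.Icc 0 T,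
    Tendsto (fun x => ‖x‖ ^ n * (Real.exp (s t x / cν) * ρ t x ^ γ))
      (Bornology.cobounded _) (nhds 0)
  int_ρ : ∀ t ∈ Set.Icc 0 T, Integrable (ρ t)
  int_ρu : ∀ t ∈ Set.Icc 0 T, Integrable (fun x => ρ t x * ‖u t x‖)
  int_ρu2 : ∀ t ∈ Set.Icc 0 T, Integrable (fun x => ρ t x * ‖u t x‖ ^ 2)
  int_ρx2 : ∀ t ∈ Set.Icc 0 T, Integrable (fun x => ρ t x * ‖x‖ ^ 2)
  int_ρux : ∀ t ∈ Set.Icc 0 T, Integrable (fun x => ρ t x * ‖u t x‖ * ‖x‖)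
  int_p : ∀ t ∈ Set.Icc 0 T, Integrable (fun x => Real.exp (s t x / cν) * ρ t x ^ γ)
  /-- `M(t) = ∫ρ` is differentiable, by differentiation under the integral sign. -/
  hM : ∀ t ∈ Set.Icc 0 T,
    HasDerivAt (fun τ => ∫ x, ρ τ x) (∫ x, deriv (fun τ => ρ τ x) t) t
  /-- `ℙ(t) = ∫ρu` is differentiable, by differentiation under the integral sign. -/
  hP : ∀ t ∈ Set.Icc 0 T,
    HasDerivAt (fun τ => ∫ x, ρ τ x • u τ x) (∫ x, deriv (fun τ => ρ τ x • u τ x) t) t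
  /-- `F(t) = ∫ρ u·x` is differentiable, by differentiation under the integral sign. -/
  hF : ∀ t ∈ Set.Icc 0 T,
    HasDerivAt (fun τ => ∫ x, ρ τ x * ⟪u τ x, x⟫_ℝ)
      (∫ x, deriv (fun τ => ρ τ x * ⟪u τ x, x⟫_ℝ) t) t
  /-- `G(t) = (1/2)∫ρ|x|²` is differentiable, by differentiation under the integral sign. -/
  hG : ∀ t ∈ Set.Icc 0 T,
    HasDerivAt (fun τ => (1 / 2 : ℝ) * ∫ x, ρ τ x * ‖x‖ ^ 2)
      ((1 / 2 : ℝ) * ∫ x, deriv (fun τ => ρ τ x * ‖x‖ ^ 2) t) t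
  /-- `E(t) = E_k(t) + E_i(t)` is differentiable, by differentiation under the integral
  sign. -/
  hE : ∀ t ∈ Set.Icc 0 T,
    HasDerivAt (fun τ => ∫ x, ((1 / 2 : ℝ) * ρ τ x * ‖u τ x‖ ^ 2
        + Real.exp (s τ x / cν) * ρ τ x ^ γ / (γ - 1)))
      (∫ x, deriv (fun τ => (1 / 2 : ℝ) * ρ τ x * ‖u τ x‖ ^ 2
        + Real.exp (s τ x / cν) * ρ τ x ^ γ / (γ - 1)) t) t

namespace FullEulerSolution

variable {n : ℕ} {γ cν s₁ T : ℝ}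

/-- The mass `M(t) = ∫ ρ dx`. -/
def M (S : FullEulerSolution n γ cν s₁ T) (t : ℝ) : ℝ := ∫ x, S.ρ t x

/-- The momentum `ℙ(t) = ∫ ρ u dx`. -/
def P (S : FullEulerSolution n γ cν s₁ T) (t : ℝ) : EuclideanSpace ℝ (Fin n) :=
  ∫ x, S.ρ t x • S.u t x

/-- The momentum weight `F(t) = ∫ ρ u·x dx`. -/
def F (S : FullEulerSolution n γ cν s₁ T) (t : ℝ) : ℝ := ∫ x, S.ρ t x * ⟪S.u t x, x⟫_ℝ

/-- The momentum of inertia `G(t) = (1/2) ∫ ρ |x|² dx`. -/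
def G (S : FullEulerSolution n γ cν s₁ T) (t : ℝ) : ℝ :=
  (1 / 2 : ℝ) * ∫ x, S.ρ t x * ‖x‖ ^ 2

/-- The kinetic energy `E_k(t) = (1/2) ∫ ρ |u|² dx`. -/
def Ek (S : FullEulerSolution n γ cν s₁ T) (t : ℝ) : ℝ :=
  (1 / 2 : ℝ) * ∫ x, S.ρ t x * ‖S.u t x‖ ^ 2

/-- The internal energy `E_i(t) = (1/(γ−1)) ∫ p dx` with `p = exp(s/c_ν) ρ^γ`. -/
def Ei (S : FullEulerSolution n γ cν s₁ T) (t : ℝ) : ℝ :=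
  (1 / (γ - 1)) * ∫ x, Real.exp (S.s t x / cν) * S.ρ t x ^ γ

/-- The total energy `E(t) = E_k(t) + E_i(t)`. -/
def E (S : FullEulerSolution n γ cν s₁ T) (t : ℝ) : ℝ := S.Ek t + S.Ei t

/-- The functional `J(t) = G(t) − (t+1)F(t) + (t+1)² E(t)`. -/
def J (S : FullEulerSolution n γ cν s₁ T) (t : ℝ) : ℝ :=
  S.G t - (t + 1) * S.F t + (t + 1) ^ 2 * S.E t

end FullEulerSolution

/-- If `f k → f` at the endpoints of `[a, b]` and the derivatives of `f k` converge boundedly to a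
nonpositive function on `(a, b)`, then `f b ≤ f a`. -/
theorem le_of_tendsto_of_tendsto_deriv_nonpos {f f' : ℕ → ℝ → ℝ} {g : ℝ → ℝ} {a b fa fb C : ℝ}
    (hab : a ≤ b) (hc : ∀ k, ContinuousOn (f k) (Set.Icc a b))
    (hd : ∀ k, ∀ x ∈ Set.Ioo a b, HasDerivAt (f k) (f' k x) x)
    (hC : ∀ k, ∀ x ∈ Set.Ioo a b, |f' k x| ≤ C)
    (hlim : ∀ x ∈ Set.Ioo a b, Tendsto (fun k => f' k x) atTop (nhds (g x)))
    (hg : ∀ x ∈ Set.Ioo a b, g x ≤ 0)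
    (ha : Tendsto (fun k => f k a) atTop (nhds fa))
    (hb : Tendsto (fun k => f k b) atTop (nhds fb)) : fb ≤ fa := by
  have hmeas : ∀ k, AEStronglyMeasurable (f' k) (volume.restrict (Set.Ioo a b)) := fun k =>
    (aestronglyMeasurable_deriv (f k) _).congr
      (ae_restrict_of_forall_mem measurableSet_Ioo fun x hx => (hd k x hx).deriv)
  have hbd : ∀ k, ∀ᵐ x ∂(volume.restrict (Set.Ioo a b)), ‖f' k x‖ ≤ C := fun k =>
    ae_restrict_of_forall_mem measurableSet_Ioo fun x hx => hC k x hx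
  have hconst : Integrable (fun _ : ℝ => C) (volume.restrict (Set.Ioo a b)) :=
    integrableOn_const (by simp)
  have hint : ∀ k, ∫ x in Set.Ioo a b, f' k x = f k b - f k a := fun k => by
    rw [← integral_Ioc_eq_integral_Ioo, ← intervalIntegral.integral_of_le hab]
    refine intervalIntegral.integral_eq_sub_of_hasDerivAt_of_le hab (hc k) (hd k) ?_
    rw [intervalIntegrable_iff_integrableOn_Ioo_of_le hab]
    exact hconst.mono' (hmeas k) (hbd k)
  have hdct := tendsto_integral_of_dominated_convergence (fun _ => C) hmeas hconst hbd
    (ae_restrict_of_forall_mem measurableSet_Ioo hlim)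
  simp only [hint] at hdct
  have heq := tendsto_nhds_unique hdct (hb.sub ha)
  have hnonpos : ∫ x in Set.Ioo a b, g x ≤ 0 := setIntegral_nonpos measurableSet_Ioo hg
  linarith

theorem abs_integral_le_of_abs_le {α : Type*} [MeasurableSpace α] {μ : Measure α}
    {f bound : α → ℝ} (hbound : Integrable bound μ) (hle : ∀ x, |f x| ≤ bound x) :
    |∫ x, f x ∂μ| ≤ ∫ x, bound x ∂μ :=
  norm_integral_le_of_norm_le (f := f) hbound (Eventually.of_forall hle)

/-- Dominated convergence for sequences that are eventually constant at every point. -/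
theorem tendsto_integral_of_dominated_of_eventually_eq {α : Type*} [MeasurableSpace α]
    {μ : Measure α} {f : ℕ → α → ℝ} {g bound : α → ℝ}
    (hf : ∀ k, AEStronglyMeasurable (f k) μ) (hbound : Integrable bound μ)
    (hle : ∀ k x, |f k x| ≤ bound x) (hev : ∀ x, ∀ᶠ k in atTop, f k x = g x) :
    Tendsto (fun k => ∫ x, f k x ∂μ) atTop (nhds (∫ x, g x ∂μ)) :=
  tendsto_integral_of_dominated_convergence bound hf hbound
    (fun k => Eventually.of_forall fun x => hle k x)
    (Eventually.of_forall fun x => tendsto_const_nhds.congr'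
      ((hev x).mono fun _ h => h.symm))

section Cutoff

variable {V : Type*} [NormedAddCommGroup V] [InnerProductSpace ℝ V] [FiniteDimensional ℝ V]

/-- A sequence of compactly supported `C¹` functions exhausting the space, with gradients bounded
by `C` and by `C / |x|`. -/
structure IsCutoffSeq (φ : ℕ → V → ℝ) (C : ℝ) : Prop where
  contDiff : ∀ k, ContDiff ℝ 1 (φ k)
  hasCompactSupport : ∀ k, HasCompactSupport (φ k)
  abs_le_one : ∀ k x, |φ k x| ≤ 1
  norm_fderiv_le : ∀ k x, ‖fderiv ℝ (φ k) x‖ ≤ C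
  norm_mul_norm_fderiv_le : ∀ k x, ‖x‖ * ‖fderiv ℝ (φ k) x‖ ≤ C
  eventually_eq : ∀ x, ∀ᶠ k in atTop, φ k x = 1 ∧ fderiv ℝ (φ k) x = 0

theorem exists_isCutoffSeq : ∃ (φ : ℕ → V → ℝ) (C : ℝ), IsCutoffSeq φ C := by
  let b : ContDiffBump (0 : V) := ⟨1, 2, one_pos, one_lt_two⟩
  have hb : ContDiff ℝ 1 b := b.contDiff
  have hb' : Continuous (fderiv ℝ b) := hb.continuous_fderiv one_ne_zero
  have hbs : HasCompactSupport (fderiv ℝ b) := b.hasCompactSupport.fderiv ℝ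
  obtain ⟨C₁, hC₁⟩ := hbs.exists_bound_of_continuous hb'
  obtain ⟨C₂, hC₂⟩ := (hbs.norm.mul_left (f := fun x : V => ‖x‖)).exists_bound_of_continuous
    (continuous_norm.mul hb'.norm)
  have hpos : ∀ k : ℕ, (0 : ℝ) < (k + 1 : ℝ)⁻¹ := fun k => by positivity
  have hfd : ∀ (k : ℕ) (x : V), fderiv ℝ (fun y => b (((k : ℝ) + 1)⁻¹ • y)) x
      = ((k : ℝ) + 1)⁻¹ • fderiv ℝ b (((k : ℝ) + 1)⁻¹ • x) := fun k x => by
    have h := (hb.differentiable one_ne_zero (((k : ℝ) + 1)⁻¹ • x)).hasFDerivAt.comp x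
      ((hasFDerivAt_id x).const_smul (((k : ℝ) + 1)⁻¹))
    refine h.fderiv.trans ?_
    ext v
    simp
  refine ⟨fun k x => b (((k : ℝ) + 1)⁻¹ • x), max C₁ C₂, fun k => ?_, fun k => ?_, fun k x => ?_,
    fun k x => ?_, fun k x => ?_, fun x => ?_⟩
  · exact hb.comp (contDiff_const_smul _)
  · exact b.hasCompactSupport.comp_smul (hpos k).ne'
  · rw [abs_of_nonneg b.nonneg]
    exact b.le_one
  · rw [hfd, norm_smul, Real.norm_of_nonneg (hpos k).le]
    have h1 : ((k : ℝ) + 1)⁻¹ ≤ 1 := inv_le_one_of_one_le₀ (by linarith [k.cast_nonneg (α := ℝ)])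
    calc _ ≤ 1 * ‖fderiv ℝ b (((k : ℝ) + 1)⁻¹ • x)‖ := by gcongr
      _ ≤ max C₁ C₂ := by rw [one_mul]; exact (hC₁ _).trans (le_max_left _ _)
  · have h := hC₂ (((k : ℝ) + 1)⁻¹ • x)
    rw [Pi.mul_apply, norm_mul, norm_norm, norm_norm, norm_smul,
      Real.norm_of_nonneg (hpos k).le] at h
    rw [hfd, norm_smul, Real.norm_of_nonneg (hpos k).le]
    refine le_trans (le_of_eq ?_) (h.trans (le_max_right _ _))
    ring
  · obtain ⟨K, hK⟩ := exists_nat_gt ‖x‖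
    filter_upwards [eventually_ge_atTop K] with k hk
    have hlt : ‖x‖ < (k : ℝ) + 1 := by
      have : (K : ℝ) ≤ k := by exact_mod_cast hk
      linarith
    have hmem : ((k : ℝ) + 1)⁻¹ • x ∈ Metric.ball (0 : V) b.rIn := by
      rw [mem_ball_zero_iff, norm_smul, Real.norm_of_nonneg (hpos k).le, inv_mul_eq_div,
        show b.rIn = 1 from rfl]
      exact (div_lt_one (by positivity)).2 hlt
    refine ⟨b.one_of_mem_closedBall (Metric.ball_subset_closedBall hmem), ?_⟩
    rw [hfd, (b.eventuallyEq_one_of_mem_ball hmem).fderiv_eq]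
    simp

end Cutoff

section TimeDerivative

variable {V : Type*} [NormedAddCommGroup V] [NormedSpace ℝ V] [MeasurableSpace V] [BorelSpace V]
  {μ : Measure V} [IsFiniteMeasureOnCompacts μ] {q : ℝ → V → ℝ} {ψ : V → ℝ} {T : ℝ}

theorem continuousOn_integral_mul_of_hasCompactSupport
    (hq : ContDiffOn ℝ 1 (fun p : ℝ × V => q p.1 p.2) (Set.Icc 0 T ×ˢ Set.univ))
    (hψ : Continuous ψ) (hψs : HasCompactSupport ψ) :
    ContinuousOn (fun τ => ∫ x, q τ x * ψ x ∂μ) (Set.Icc 0 T) := by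
  refine continuousOn_integral_of_compact_support hψs ?_ fun p x _ hx => ?_
  · exact hq.continuousOn.mul (hψ.comp continuous_snd).continuousOn
  · rw [image_eq_zero_of_notMem_tsupport hx, mul_zero]

theorem hasDerivAt_integral_mul_of_hasCompactSupport
    (hq : ContDiffOn ℝ 1 (fun p : ℝ × V => q p.1 p.2) (Set.Icc 0 T ×ˢ Set.univ))
    (hψ : Continuous ψ) (hψs : HasCompactSupport ψ) {t : ℝ} (ht : t ∈ Set.Ioo 0 T) :
    HasDerivAt (fun τ => ∫ x, q τ x * ψ x ∂μ) (∫ x, deriv (fun τ => q τ x) t * ψ x ∂μ) t := by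
  have hopen : IsOpen (Set.Ioo 0 T ×ˢ (Set.univ : Set V)) := isOpen_Ioo.prod isOpen_univ
  have hq' : ContDiffOn ℝ 1 (fun p : ℝ × V => q p.1 p.2) (Set.Ioo 0 T ×ˢ Set.univ) :=
    hq.mono (Set.prod_mono Set.Ioo_subset_Icc_self subset_rfl)
  have hder : ∀ τ ∈ Set.Ioo 0 T, ∀ x, HasDerivAt (fun σ => q σ x)
      (fderiv ℝ (fun p : ℝ × V => q p.1 p.2) (τ, x) (1, 0)) τ := fun τ hτ x => by
    have hdiff : DifferentiableAt ℝ (fun p : ℝ × V => q p.1 p.2) (τ, x) :=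
      (hq'.differentiableOn one_ne_zero).differentiableAt (hopen.mem_nhds ⟨hτ, trivial⟩)
    exact hdiff.hasFDerivAt.comp_hasDerivAt τ ((hasDerivAt_id τ).prodMk (hasDerivAt_const τ x))
  have hcont : ContinuousOn (fun p : ℝ × V => deriv (fun σ => q σ p.2) p.1)
      (Set.Ioo 0 T ×ˢ Set.univ) :=
    ((hq'.continuousOn_fderiv_of_isOpen hopen le_rfl).clm_apply continuousOn_const).congr
      fun p hp => (hder p.1 hp.1 p.2).deriv
  have hslice : ∀ τ ∈ Set.Ioo 0 T, Continuous (q τ) := fun τ hτ => by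
    rw [← continuousOn_univ]
    exact hq'.continuousOn.comp (f := fun x : V => (τ, x)) (by fun_prop) fun x _ => ⟨hτ, trivial⟩
  obtain ⟨ε, hε, hball⟩ := Metric.nhds_basis_closedBall.mem_iff.1 (isOpen_Ioo.mem_nhds ht)
  obtain ⟨B, hB⟩ := ((isCompact_closedBall t ε).prod hψs).exists_bound_of_continuousOn
    (hcont.mono (Set.prod_mono hball (Set.subset_univ _)))
  refine (hasDerivAt_integral_of_dominated_loc_of_deriv_le (bound := fun x => B * ‖ψ x‖)
    (F' := fun τ x => deriv (fun σ => q σ x) τ * ψ x)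
    (Metric.closedBall_mem_nhds t hε) ?_ ?_ ?_ ?_ ?_ ?_).2
  · filter_upwards [isOpen_Ioo.mem_nhds ht] with τ hτ
    exact (((hslice τ hτ).mul hψ).integrable_of_hasCompactSupport
      hψs.mul_left).aestronglyMeasurable
  · exact ((hslice t ht).mul hψ).integrable_of_hasCompactSupport hψs.mul_left
  · have hc : Continuous fun x => deriv (fun σ => q σ x) t := by
      rw [← continuousOn_univ]
      exact hcont.comp (f := fun x : V => (t, x)) (by fun_prop) fun x _ => ⟨ht, trivial⟩
    exact ((hc.mul hψ).integrable_of_hasCompactSupport hψs.mul_left).aestronglyMeasurable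
  · refine Eventually.of_forall fun x τ hτ => ?_
    by_cases hx : x ∈ tsupport ψ
    · rw [norm_mul]
      gcongr
      exact hB (τ, x) ⟨hτ, hx⟩
    · simp [image_eq_zero_of_notMem_tsupport hx]
  · exact (hψ.norm.integrable_of_hasCompactSupport hψs.norm).const_mul B
  · refine Eventually.of_forall fun x τ hτ => ?_
    have h := hder τ (hball hτ) x
    rw [h.deriv]
    exact h.mul_const _

end TimeDerivative

section Divergence

variable {n : ℕ}

theorem sum_mul_map_single_eq (L : EuclideanSpace ℝ (Fin n) →L[ℝ] ℝ)
    (v : EuclideanSpace ℝ (Fin n)) : ∑ i, v i * L (EuclideanSpace.single i 1) = L v := by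
  conv_rhs => rw [← (EuclideanSpace.basisFun (Fin n) ℝ).sum_repr v]
  simp

theorem integral_fderiv_mul_eq_neg_of_hasCompactSupport {f ψ : EuclideanSpace ℝ (Fin n) → ℝ}
    (hf : ContDiff ℝ 1 f) (hψ : ContDiff ℝ 1 ψ) (hψs : HasCompactSupport ψ)
    (v : EuclideanSpace ℝ (Fin n)) :
    Integrable (fun x => fderiv ℝ f x v * ψ x) ∧ Integrable (fun x => f x * fderiv ℝ ψ x v) ∧
      ∫ x, fderiv ℝ f x v * ψ x = -∫ x, f x * fderiv ℝ ψ x v := by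
  have hf' : Continuous fun x => fderiv ℝ f x v :=
    (hf.continuous_fderiv one_ne_zero).clm_apply continuous_const
  have hψ' : Continuous fun x => fderiv ℝ ψ x v :=
    (hψ.continuous_fderiv one_ne_zero).clm_apply continuous_const
  have h1 := (hf'.mul hψ.continuous).integrable_of_hasCompactSupport (μ := volume) hψs.mul_left
  have h2 := (hf.continuous.mul hψ').integrable_of_hasCompactSupport (μ := volume)
    (hψs.fderiv_apply ℝ v).mul_left
  have h3 := (hf.continuous.mul hψ.continuous).integrable_of_hasCompactSupport (μ := volume)
    hψs.mul_left
  refine ⟨h1, h2, ?_⟩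
  rw [integral_mul_fderiv_eq_neg_fderiv_mul_of_integrable h1 h2 h3
    (fun x _ => hf.differentiable one_ne_zero x) (fun x _ => hψ.differentiable one_ne_zero x),
    neg_neg]

/-- Integration by parts for the divergence of the vector field `w u`. -/
theorem integral_divergence_mul_eq_neg {w ψ : EuclideanSpace ℝ (Fin n) → ℝ}
    {u : EuclideanSpace ℝ (Fin n) → EuclideanSpace ℝ (Fin n)} (hw : ContDiff ℝ 1 w)
    (hu : ContDiff ℝ 1 u) (hψ : ContDiff ℝ 1 ψ) (hψs : HasCompactSupport ψ) :
    Integrable (fun x => (∑ i, fderiv ℝ (fun y => w y * u y i) x (EuclideanSpace.single i 1))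
        * ψ x) ∧
      ∫ x, (∑ i, fderiv ℝ (fun y => w y * u y i) x (EuclideanSpace.single i 1)) * ψ x
        = -∫ x, w x * fderiv ℝ ψ x (u x) := by
  have hui : ∀ i, ContDiff ℝ 1 fun y => w y * u y i := fun i => hw.mul (contDiff_euclidean.1 hu i)
  have key := fun i => integral_fderiv_mul_eq_neg_of_hasCompactSupport (hui i) hψ hψs
    (EuclideanSpace.single i 1)
  simp only [Finset.sum_mul]
  refine ⟨integrable_finsetSum _ fun i _ => (key i).1, ?_⟩
  rw [integral_finsetSum _ fun i _ => (key i).1, Finset.sum_congr rfl fun i _ => (key i).2.2,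
    Finset.sum_neg_distrib, ← integral_finsetSum _ fun i _ => (key i).2.1]
  congr 1
  refine integral_congr_ae (Eventually.of_forall fun x => ?_)
  simp only [mul_assoc, ← Finset.mul_sum]
  rw [sum_mul_map_single_eq]

end Divergence

namespace FullEulerSolution

variable {n : ℕ} {γ cν s₁ T : ℝ} (S : FullEulerSolution n γ cν s₁ T)

/-- The pressure `p = exp(s/c_ν) ρ^γ`. -/
def pressure (t : ℝ) (x : EuclideanSpace ℝ (Fin n)) : ℝ :=
  Real.exp (S.s t x / cν) * S.ρ t x ^ γ

section Regularity

variable {S} {t : ℝ}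

theorem contDiff_ρ (ht : t ∈ Set.Icc 0 T) : ContDiff ℝ 1 (S.ρ t) := by
  rw [← contDiffOn_univ]
  exact S.smooth_ρ.comp (f := fun x => (t, x)) (by fun_prop) fun x _ => ⟨ht, trivial⟩

theorem contDiff_u (ht : t ∈ Set.Icc 0 T) : ContDiff ℝ 1 (S.u t) := by
  rw [← contDiffOn_univ]
  exact S.smooth_u.comp (f := fun x => (t, x)) (by fun_prop) fun x _ => ⟨ht, trivial⟩

theorem contDiff_pressure (ht : t ∈ Set.Icc 0 T) (hγ : 1 < γ) : ContDiff ℝ 1 (S.pressure t) := by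
  have hs : ContDiff ℝ 1 (S.s t) := by
    rw [← contDiffOn_univ]
    exact S.smooth_s.comp (f := fun x => (t, x)) (by fun_prop) fun x _ => ⟨ht, trivial⟩
  have hpow : ContDiff ℝ 1 fun r : ℝ => r ^ γ := by
    exact_mod_cast Real.contDiff_rpow_const_of_le (n := 1) (by exact_mod_cast hγ.le)
  exact (hs.div_const cν).exp.mul (hpow.comp (contDiff_ρ ht))

theorem pressure_nonneg (ht : t ∈ Set.Icc 0 T) (x : EuclideanSpace ℝ (Fin n)) :
    0 ≤ S.pressure t x :=
  mul_nonneg (Real.exp_pos _).le (Real.rpow_nonneg (S.ρ_nonneg t ht x) _)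

theorem Ek_nonneg (ht : t ∈ Set.Icc 0 T) : 0 ≤ S.Ek t :=
  mul_nonneg (by norm_num) (integral_nonneg fun x => mul_nonneg (S.ρ_nonneg t ht x) (sq_nonneg _))

theorem G_nonneg (ht : t ∈ Set.Icc 0 T) : 0 ≤ S.G t :=
  mul_nonneg (by norm_num) (integral_nonneg fun x => mul_nonneg (S.ρ_nonneg t ht x) (sq_nonneg _))

theorem Ei_nonneg (ht : t ∈ Set.Icc 0 T) (hγ : 1 < γ) : 0 ≤ S.Ei t :=
  mul_nonneg (one_div_nonneg.2 (by linarith)) (integral_nonneg (pressure_nonneg ht))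

theorem integral_ρ_mul_norm_mul_norm_le (ht : t ∈ Set.Icc 0 T) :
    ∫ x, S.ρ t x * ‖S.u t x‖ * ‖x‖ ≤ S.Ek t + S.G t := by
  rw [Ek, G, ← integral_const_mul, ← integral_const_mul,
    ← integral_add ((S.int_ρu2 t ht).const_mul _) ((S.int_ρx2 t ht).const_mul _)]
  refine integral_mono (S.int_ρux t ht)
    (((S.int_ρu2 t ht).const_mul _).add ((S.int_ρx2 t ht).const_mul _)) fun x => ?_
  simp only
  nlinarith [mul_nonneg (S.ρ_nonneg t ht x) (sq_nonneg (‖S.u t x‖ - ‖x‖))]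

theorem integrable_ρ_inner (ht : t ∈ Set.Icc 0 T) :
    Integrable fun x => S.ρ t x * ⟪S.u t x, x⟫_ℝ := by
  have hρ := (contDiff_ρ (S := S) ht).continuous
  have hu := (contDiff_u (S := S) ht).continuous
  refine (S.int_ρux t ht).mono' (by fun_prop) (Eventually.of_forall fun x => ?_)
  rw [norm_mul, Real.norm_of_nonneg (S.ρ_nonneg t ht x), mul_assoc]
  exact mul_le_mul_of_nonneg_left (norm_inner_le_norm _ _) (S.ρ_nonneg t ht x)

/-- Completing the square: `J(t) = (1/2)∫ρ|x − (t+1)u|² dx + (t+1)² E_i(t)`. -/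
theorem sq_mul_Ei_le_J (ht : t ∈ Set.Icc 0 T) : (t + 1) ^ 2 * S.Ei t ≤ S.J t := by
  have h1 := (S.int_ρx2 t ht).const_mul (1 / 2)
  have h2 := (integrable_ρ_inner (S := S) ht).const_mul (t + 1)
  have h3 := (S.int_ρu2 t ht).const_mul ((t + 1) ^ 2 * (1 / 2))
  have h12 : Integrable fun x => 1 / 2 * (S.ρ t x * ‖x‖ ^ 2)
      - (t + 1) * (S.ρ t x * ⟪S.u t x, x⟫_ℝ) := h1.sub h2
  have hsq : 0 ≤ S.G t - (t + 1) * S.F t + (t + 1) ^ 2 * S.Ek t := by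
    rw [G, F, Ek, ← mul_assoc, ← integral_const_mul, ← integral_const_mul, ← integral_const_mul,
      ← integral_sub h1 h2, ← integral_add h12 h3]
    refine integral_nonneg fun x => ?_
    have h := mul_nonneg (S.ρ_nonneg t ht x) (sq_nonneg ‖x - (t + 1) • S.u t x‖)
    rw [norm_sub_sq_real, inner_smul_right, norm_smul, mul_pow, Real.norm_eq_abs, sq_abs,
      real_inner_comm] at h
    simp only [Pi.zero_apply]
    nlinarith
  rw [J, E]
  linarith

end Regularity

section Energy

variable {S} {t : ℝ}

theorem E_eq_integral (ht : t ∈ Set.Icc 0 T) :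
    S.E t = ∫ x, ((1 / 2 : ℝ) * S.ρ t x * ‖S.u t x‖ ^ 2
      + Real.exp (S.s t x / cν) * S.ρ t x ^ γ / (γ - 1)) := by
  simp only [mul_assoc]
  rw [integral_add ((S.int_ρu2 t ht).const_mul _) ((S.int_p t ht).div_const _),
    integral_const_mul, integral_div, E, Ek, Ei]
  ring

theorem integral_deriv_energy_eq_zero (hγ : 1 < γ) (ht : t ∈ Set.Icc 0 T) :
    ∫ x, deriv (fun τ => (1 / 2 : ℝ) * S.ρ τ x * ‖S.u τ x‖ ^ 2
        + Real.exp (S.s τ x / cν) * S.ρ τ x ^ γ / (γ - 1)) t = 0 := by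
  set e' : EuclideanSpace ℝ (Fin n) → ℝ := fun x =>
    deriv (fun τ => (1 / 2 : ℝ) * S.ρ τ x * ‖S.u τ x‖ ^ 2
        + Real.exp (S.s τ x / cν) * S.ρ τ x ^ γ / (γ - 1)) t
  by_cases hint : Integrable e'
  swap
  · exact integral_undef hint
  have hρ := contDiff_ρ (S := S) ht
  have hu := contDiff_u (S := S) ht
  have hp := contDiff_pressure (S := S) ht hγ
  set w : EuclideanSpace ℝ (Fin n) → ℝ := fun y =>
    (1 / 2 : ℝ) * S.ρ t y * ‖S.u t y‖ ^ 2 + γ * S.pressure t y / (γ - 1) with hw_def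
  have hw : ContDiff ℝ 1 w :=
    ((contDiff_const.mul hρ).mul (hu.norm_sq ℝ)).add ((contDiff_const.mul hp).div_const _)
  have hw_int : Integrable w := by
    simp only [hw_def, mul_assoc]
    exact ((S.int_ρu2 t ht).const_mul _).add (((S.int_p t ht).const_mul γ).div_const _)
  obtain ⟨B, hB⟩ : ∃ B, ∀ x, ‖S.u t x‖ ≤ B := by
    have hev := (S.decay_u t ht).eventually (gt_mem_nhds one_pos)
    rw [Metric.cobounded_eq_cocompact] at hev
    obtain ⟨K, hK, hKs⟩ := mem_cocompact.1 hev
    obtain ⟨B, hB⟩ := hK.exists_bound_of_continuousOn hu.continuous.continuousOn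
    refine ⟨max B 1, fun x => ?_⟩
    by_cases hx : x ∈ K
    · exact (hB x hx).trans (le_max_left _ _)
    · exact (le_of_lt (hKs hx)).trans (le_max_right _ _)
  obtain ⟨φ, C, hφ⟩ := exists_isCutoffSeq (V := EuclideanSpace ℝ (Fin n))
  have hweak : ∀ k, ∫ x, e' x * φ k x = ∫ x, w x * fderiv ℝ (φ k) x (S.u t x) := fun k => by
    have h := (integral_divergence_mul_eq_neg hw hu (hφ.contDiff k) (hφ.hasCompactSupport k)).2
    rw [← neg_eq_iff_eq_neg] at h
    rw [← h, ← integral_neg]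
    refine integral_congr_ae (Eventually.of_forall fun x => ?_)
    have hx := S.energy_eq t ht x
    simp only
    rw [← neg_mul]
    congr 1
    exact eq_neg_of_add_eq_zero_left hx
  have hlim₁ : Tendsto (fun k => ∫ x, e' x * φ k x) atTop (nhds (∫ x, e' x)) := by
    refine tendsto_integral_of_dominated_of_eventually_eq (bound := fun x => |e' x|)
      (fun k => hint.aestronglyMeasurable.mul (hφ.contDiff k).continuous.aestronglyMeasurable)
      hint.abs (fun k x => ?_) fun x => ?_
    · rw [abs_mul]
      exact mul_le_of_le_one_right (abs_nonneg _) (hφ.abs_le_one k x)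
    · filter_upwards [hφ.eventually_eq x] with k hk
      rw [hk.1, mul_one]
  have hlim₂ : Tendsto (fun k => ∫ x, w x * fderiv ℝ (φ k) x (S.u t x)) atTop
      (nhds (∫ _ : EuclideanSpace ℝ (Fin n), (0 : ℝ))) := by
    refine tendsto_integral_of_dominated_of_eventually_eq (bound := fun x => |w x| * (C * B))
      (fun k => ?_) (hw_int.abs.mul_const _) (fun k x => ?_) fun x => ?_
    · exact (hw.continuous.mul (((hφ.contDiff k).continuous_fderiv one_ne_zero).clm_apply
        hu.continuous)).aestronglyMeasurable
    · rw [abs_mul]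
      refine mul_le_mul_of_nonneg_left ?_ (abs_nonneg _)
      refine ((fderiv ℝ (φ k) x).le_opNorm _).trans ?_
      have hC := (norm_nonneg _).trans (hφ.norm_fderiv_le k x)
      exact mul_le_mul (hφ.norm_fderiv_le k x) (hB x) (norm_nonneg _) hC
    · filter_upwards [hφ.eventually_eq x] with k hk
      simp [hk.2]
  simp only [← hweak] at hlim₂
  simpa using tendsto_nhds_unique hlim₁ hlim₂

/-- Conservation of the total energy. -/
theorem E_eq_E_zero (hγ : 1 < γ) (ht : t ∈ Set.Icc 0 T) : S.E t = S.E 0 := by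
  have hder : ∀ τ ∈ Set.Icc 0 T, HasDerivAt (fun τ => ∫ x, ((1 / 2 : ℝ) * S.ρ τ x * ‖S.u τ x‖ ^ 2
        + Real.exp (S.s τ x / cν) * S.ρ τ x ^ γ / (γ - 1))) 0 τ := fun τ hτ => by
    have h := S.hE τ hτ
    rwa [integral_deriv_energy_eq_zero hγ hτ] at h
  rw [E_eq_integral ht, E_eq_integral ⟨le_rfl, ht.1.trans ht.2⟩]
  exact constant_of_has_deriv_right_zero
    (fun τ hτ => (hder τ hτ).continuousAt.continuousWithinAt)
    (fun τ hτ => (hder τ ⟨hτ.1, hτ.2.le⟩).hasDerivWithinAt) t ht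

end Energy

section Truncation

variable {S} {t : ℝ} {φ : EuclideanSpace ℝ (Fin n) → ℝ}

/-- The momentum of inertia weighted by a cutoff function. -/
def truncG (S : FullEulerSolution n γ cν s₁ T) (φ : EuclideanSpace ℝ (Fin n) → ℝ) (t : ℝ) : ℝ :=
  ∫ x, S.ρ t x * ((1 / 2 : ℝ) * ‖x‖ ^ 2 * φ x)

/-- The momentum weight weighted by a cutoff function. -/
def truncF (S : FullEulerSolution n γ cν s₁ T) (φ : EuclideanSpace ℝ (Fin n) → ℝ) (t : ℝ) : ℝ :=
  ∑ i, ∫ x, S.ρ t x * S.u t x i * (x i * φ x)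

/-- The time derivative of `truncG`. -/
def truncG' (S : FullEulerSolution n γ cν s₁ T) (φ : EuclideanSpace ℝ (Fin n) → ℝ) (t : ℝ) : ℝ :=
  ∫ x, S.ρ t x * (φ x * ⟪S.u t x, x⟫_ℝ + (1 / 2 : ℝ) * ‖x‖ ^ 2 * fderiv ℝ φ x (S.u t x))

/-- The time derivative of `truncF`. -/
def truncF' (S : FullEulerSolution n γ cν s₁ T) (φ : EuclideanSpace ℝ (Fin n) → ℝ) (t : ℝ) : ℝ :=
  ∫ x, (S.ρ t x * (φ x * ‖S.u t x‖ ^ 2 + ⟪S.u t x, x⟫_ℝ * fderiv ℝ φ x (S.u t x))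
    + S.pressure t x * (n * φ x + fderiv ℝ φ x x))

theorem contDiff_coord (i : Fin n) : ContDiff ℝ 1 fun x : EuclideanSpace ℝ (Fin n) => x i :=
  contDiff_euclidean.1 contDiff_id i

theorem contDiffOn_ρ_mul_u (i : Fin n) :
    ContDiffOn ℝ 1 (fun p : ℝ × EuclideanSpace ℝ (Fin n) => S.ρ p.1 p.2 * S.u p.1 p.2 i)
      (Set.Icc 0 T ×ˢ Set.univ) :=
  S.smooth_ρ.mul ((contDiff_coord i).comp_contDiffOn S.smooth_u)

theorem continuousOn_truncG (hφ : Continuous φ) (hφs : HasCompactSupport φ) :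
    ContinuousOn (S.truncG φ) (Set.Icc 0 T) :=
  continuousOn_integral_mul_of_hasCompactSupport S.smooth_ρ (by fun_prop) hφs.mul_left

theorem continuousOn_truncF (hφ : Continuous φ) (hφs : HasCompactSupport φ) :
    ContinuousOn (S.truncF φ) (Set.Icc 0 T) :=
  continuousOn_finsetSum _ fun i _ => continuousOn_integral_mul_of_hasCompactSupport
    (contDiffOn_ρ_mul_u i) ((contDiff_coord i).continuous.mul hφ) hφs.mul_left

theorem hasDerivAt_truncG (hφ : ContDiff ℝ 1 φ) (hφs : HasCompactSupport φ)
    (ht : t ∈ Set.Ioo 0 T) : HasDerivAt (S.truncG φ) (S.truncG' φ t) t := by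
  have ht' := Set.Ioo_subset_Icc_self ht
  have hψ : ContDiff ℝ 1 fun x : EuclideanSpace ℝ (Fin n) => (1 / 2 : ℝ) * ‖x‖ ^ 2 * φ x :=
    (contDiff_const.mul (contDiff_norm_sq ℝ)).mul hφ
  have hder := hasDerivAt_integral_mul_of_hasCompactSupport (μ := volume) S.smooth_ρ hψ.continuous
    hφs.mul_left ht
  refine hder.congr_deriv (Eq.symm ?_)
  have h := (integral_divergence_mul_eq_neg (contDiff_ρ (S := S) ht')
    (contDiff_u (S := S) ht') hψ hφs.mul_left).2
  rw [← neg_eq_iff_eq_neg, ← integral_neg] at h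
  trans ∫ x, S.ρ t x * fderiv ℝ (fun y : EuclideanSpace ℝ (Fin n) => (1 / 2 : ℝ) * ‖y‖ ^ 2 * φ y) x
    (S.u t x)
  · refine integral_congr_ae (Eventually.of_forall fun x => ?_)
    have hd := (((hasStrictFDerivAt_norm_sq x).hasFDerivAt.const_mul (1 / 2 : ℝ)).fun_mul
      (hφ.differentiable one_ne_zero x).hasFDerivAt)
    simp only
    rw [hd.fderiv, real_inner_comm]
    simp only [add_apply, smul_apply, innerSL_apply_apply,
      smul_eq_mul, nsmul_eq_mul]
    push_cast
    ring
  · rw [← h]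
    refine integral_congr_ae (Eventually.of_forall fun x => ?_)
    simp only
    rw [← neg_mul, eq_neg_of_add_eq_zero_left (S.mass_eq t ht' x)]

theorem hasDerivAt_truncF (hγ : 1 < γ) (hφ : ContDiff ℝ 1 φ) (hφs : HasCompactSupport φ)
    (ht : t ∈ Set.Ioo 0 T) : HasDerivAt (S.truncF φ) (S.truncF' φ t) t := by
  have ht' := Set.Ioo_subset_Icc_self ht
  have hρ := contDiff_ρ (S := S) ht'
  have hu := contDiff_u (S := S) ht'
  have hp := contDiff_pressure (S := S) ht' hγ
  have hψ : ∀ i, ContDiff ℝ 1 fun x : EuclideanSpace ℝ (Fin n) => x i * φ x :=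
    fun i => (contDiff_coord i).mul hφ
  have hψs : ∀ i, HasCompactSupport fun x : EuclideanSpace ℝ (Fin n) => x i * φ x :=
    fun i => hφs.mul_left
  have hρu : ∀ i, ContDiff ℝ 1 fun x => S.ρ t x * S.u t x i :=
    fun i => hρ.mul (contDiff_euclidean.1 hu i)
  have hfd : ∀ i x v, fderiv ℝ (fun y : EuclideanSpace ℝ (Fin n) => y i * φ y) x v
      = v i * φ x + x i * fderiv ℝ φ x v := fun i x v => by
    have hc : HasFDerivAt (fun y : EuclideanSpace ℝ (Fin n) => y i)
        (EuclideanSpace.proj i : EuclideanSpace ℝ (Fin n) →L[ℝ] ℝ) x :=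
      (EuclideanSpace.proj i : EuclideanSpace ℝ (Fin n) →L[ℝ] ℝ).hasFDerivAt
    rw [(hc.fun_mul (hφ.differentiable one_ne_zero x).hasFDerivAt).fderiv]
    simp
    ring
  have hint₁ : ∀ i, Integrable fun x => S.ρ t x * S.u t x i
      * fderiv ℝ (fun y : EuclideanSpace ℝ (Fin n) => y i * φ y) x (S.u t x) := fun i => by
    refine ((hρu i).continuous.mul ((((hψ i).continuous_fderiv one_ne_zero).clm_apply
      hu.continuous))).integrable_of_hasCompactSupport (HasCompactSupport.mul_left ?_)
    refine ((hψs i).fderiv ℝ).mono fun x hx => ?_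
    contrapose! hx
    simp [Function.notMem_support.1 hx]
  have hint₂ := fun i => (integral_fderiv_mul_eq_neg_of_hasCompactSupport hp (hψ i) (hψs i)
    (EuclideanSpace.single i 1)).2.1
  have hterm : ∀ i, ∫ x, deriv (fun τ => S.ρ τ x * S.u τ x i) t * (x i * φ x)
      = ∫ x, (S.ρ t x * S.u t x i
          * fderiv ℝ (fun y : EuclideanSpace ℝ (Fin n) => y i * φ y) x (S.u t x)
        + S.pressure t x * fderiv ℝ (fun y : EuclideanSpace ℝ (Fin n) => y i * φ y) x
          (EuclideanSpace.single i 1)) := fun i => by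
    obtain ⟨hi₁, hd₁⟩ := integral_divergence_mul_eq_neg (hρu i) hu (hψ i) (hψs i)
    obtain ⟨hi₂, -, hd₂⟩ := integral_fderiv_mul_eq_neg_of_hasCompactSupport hp (hψ i) (hψs i)
      (EuclideanSpace.single i 1)
    rw [← neg_eq_iff_eq_neg] at hd₁ hd₂
    rw [integral_add (hint₁ i) (hint₂ i), ← hd₁, ← hd₂, ← neg_add, ← integral_add hi₁ hi₂,
      ← integral_neg]
    refine integral_congr_ae (Eventually.of_forall fun x => ?_)
    have hx := S.momentum_eq t ht' x i
    simp only
    rw [← add_mul, ← neg_mul]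
    congr 1
    rw [add_assoc] at hx
    exact eq_neg_of_add_eq_zero_left hx
  have hder := HasDerivAt.fun_sum (u := Finset.univ) fun i _ =>
    hasDerivAt_integral_mul_of_hasCompactSupport (μ := volume)
      (q := fun τ x => S.ρ τ x * S.u τ x i) (contDiffOn_ρ_mul_u i) (hψ i).continuous (hψs i) ht
  refine hder.congr_deriv (Eq.symm ?_)
  rw [Finset.sum_congr rfl fun i _ => hterm i]
  refine Eq.trans ?_ (integral_finsetSum _ fun i _ => (hint₁ i).add (hint₂ i))
  refine integral_congr_ae (Eventually.of_forall fun x => ?_)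
  have hx := sum_mul_map_single_eq (fderiv ℝ φ x) x
  have hnorm : ∑ i, S.u t x i * S.u t x i = ‖S.u t x‖ ^ 2 := by
    rw [EuclideanSpace.real_norm_sq_eq]
    exact Finset.sum_congr rfl fun i _ => (sq _).symm
  have hinner : ∑ i, S.u t x i * x i = ⟪S.u t x, x⟫_ℝ := by
    rw [PiLp.inner_apply]
    exact Finset.sum_congr rfl fun i _ => by simp [mul_comm]
  simp only [hfd, PiLp.single_apply, if_true]
  rw [← hx, ← hnorm, ← hinner, Finset.sum_add_distrib, ← Finset.mul_sum, Finset.sum_add_distrib]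
  simp only [one_mul, Finset.sum_const, Finset.card_univ, Fintype.card_fin, nsmul_eq_mul]
  congr 1
  rw [Finset.mul_sum, Finset.sum_mul, ← Finset.sum_add_distrib, Finset.mul_sum]
  exact Finset.sum_congr rfl fun i _ => by ring

end Truncation


section Limits

variable {S} {t C : ℝ} {φ : ℕ → EuclideanSpace ℝ (Fin n) → ℝ}

theorem truncF_eq_integral {φ : EuclideanSpace ℝ (Fin n) → ℝ} (hφ : Continuous φ)
    (hφs : HasCompactSupport φ) (ht : t ∈ Set.Icc 0 T) :
    S.truncF φ t = ∫ x, S.ρ t x * ⟪S.u t x, x⟫_ℝ * φ x := by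
  have hρ := (contDiff_ρ (S := S) ht).continuous
  have hu := contDiff_u (S := S) ht
  rw [truncF, ← integral_finsetSum]
  · refine integral_congr_ae (Eventually.of_forall fun x => ?_)
    simp only [PiLp.inner_apply, Finset.mul_sum, Finset.sum_mul]
    refine Finset.sum_congr rfl fun i _ => ?_
    simp only [RCLike.inner_apply, conj_trivial]
    ring
  · intro i _
    exact ((hρ.mul (contDiff_euclidean.1 hu i).continuous).mul
      ((contDiff_coord i).continuous.mul hφ)).integrable_of_hasCompactSupport
      hφs.mul_left.mul_left

theorem tendsto_truncG (hφ : IsCutoffSeq φ C) (ht : t ∈ Set.Icc 0 T) :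
    Tendsto (fun k => S.truncG (φ k) t) atTop (nhds (S.G t)) ∧
      ∀ k, |S.truncG (φ k) t| ≤ S.G t := by
  have hρ := (contDiff_ρ (S := S) ht).continuous
  have hle : ∀ k x, |S.ρ t x * ((1 / 2 : ℝ) * ‖x‖ ^ 2 * φ k x)|
      ≤ (1 / 2 : ℝ) * (S.ρ t x * ‖x‖ ^ 2) := fun k x => by
    have h0 : 0 ≤ (1 / 2 : ℝ) * (S.ρ t x * ‖x‖ ^ 2) :=
      mul_nonneg (by norm_num) (mul_nonneg (S.ρ_nonneg t ht x) (sq_nonneg _))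
    rw [show S.ρ t x * ((1 / 2 : ℝ) * ‖x‖ ^ 2 * φ k x)
      = (1 / 2 : ℝ) * (S.ρ t x * ‖x‖ ^ 2) * φ k x by ring, abs_mul, abs_of_nonneg h0]
    exact mul_le_of_le_one_right h0 (hφ.abs_le_one k x)
  rw [G, ← integral_const_mul]
  refine ⟨tendsto_integral_of_dominated_of_eventually_eq (fun k => ?_)
    ((S.int_ρx2 t ht).const_mul _) hle fun x => ?_, fun k =>
    abs_integral_le_of_abs_le ((S.int_ρx2 t ht).const_mul _) (hle k)⟩
  · have := (hφ.contDiff k).continuous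
    exact Continuous.aestronglyMeasurable (by fun_prop)
  · filter_upwards [hφ.eventually_eq x] with k hk
    rw [hk.1]
    ring

theorem tendsto_truncF (hφ : IsCutoffSeq φ C) (ht : t ∈ Set.Icc 0 T) :
    Tendsto (fun k => S.truncF (φ k) t) atTop (nhds (S.F t)) ∧
      ∀ k, |S.truncF (φ k) t| ≤ S.Ek t + S.G t := by
  have hρ := (contDiff_ρ (S := S) ht).continuous
  have hu := (contDiff_u (S := S) ht).continuous
  have hle : ∀ k x, |S.ρ t x * ⟪S.u t x, x⟫_ℝ * φ k x| ≤ S.ρ t x * ‖S.u t x‖ * ‖x‖ :=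
    fun k x => by
    rw [abs_mul, abs_mul, abs_of_nonneg (S.ρ_nonneg t ht x), mul_assoc (S.ρ t x) ‖S.u t x‖]
    exact (mul_le_of_le_one_right (mul_nonneg (S.ρ_nonneg t ht x) (abs_nonneg _))
      (hφ.abs_le_one k x)).trans
      (mul_le_mul_of_nonneg_left (abs_real_inner_le_norm _ _) (S.ρ_nonneg t ht x))
  simp only [fun k => truncF_eq_integral (S := S) (hφ.contDiff k).continuous
    (hφ.hasCompactSupport k) ht]
  refine ⟨tendsto_integral_of_dominated_of_eventually_eq (fun k => ?_)
    (S.int_ρux t ht) hle fun x => ?_, fun k =>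
    (abs_integral_le_of_abs_le (S.int_ρux t ht) (hle k)).trans
      (integral_ρ_mul_norm_mul_norm_le ht)⟩
  · have := (hφ.contDiff k).continuous
    exact Continuous.aestronglyMeasurable (by fun_prop)
  · filter_upwards [hφ.eventually_eq x] with k hk
    rw [hk.1, mul_one]

theorem tendsto_truncG' (hφ : IsCutoffSeq φ C) (ht : t ∈ Set.Icc 0 T) :
    Tendsto (fun k => S.truncG' (φ k) t) atTop (nhds (S.F t)) ∧
      ∀ k, |S.truncG' (φ k) t| ≤ (1 + C) * (S.Ek t + S.G t) := by
  have hρ := (contDiff_ρ (S := S) ht).continuous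
  have hu := (contDiff_u (S := S) ht).continuous
  have hC : 0 ≤ C := (norm_nonneg _).trans (hφ.norm_fderiv_le 0 0)
  have hle : ∀ k x, |S.ρ t x * (φ k x * ⟪S.u t x, x⟫_ℝ
      + (1 / 2 : ℝ) * ‖x‖ ^ 2 * fderiv ℝ (φ k) x (S.u t x))|
      ≤ (1 + C) * (S.ρ t x * ‖S.u t x‖ * ‖x‖) := fun k x => by
    have h1 : |φ k x * ⟪S.u t x, x⟫_ℝ| ≤ ‖S.u t x‖ * ‖x‖ := by
      rw [abs_mul]
      exact (mul_le_of_le_one_left (abs_nonneg _) (hφ.abs_le_one k x)).trans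
        (abs_real_inner_le_norm _ _)
    have h2 : |(1 / 2 : ℝ) * ‖x‖ ^ 2 * fderiv ℝ (φ k) x (S.u t x)|
        ≤ C * (‖S.u t x‖ * ‖x‖) := by
      rw [abs_mul, abs_of_nonneg (by positivity)]
      calc (1 / 2 : ℝ) * ‖x‖ ^ 2 * |fderiv ℝ (φ k) x (S.u t x)|
          ≤ 1 * ‖x‖ ^ 2 * (‖fderiv ℝ (φ k) x‖ * ‖S.u t x‖) := by
            gcongr
            · norm_num
            · exact (fderiv ℝ (φ k) x).le_opNorm _
        _ = (‖x‖ * ‖fderiv ℝ (φ k) x‖) * (‖S.u t x‖ * ‖x‖) := by ring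
        _ ≤ C * (‖S.u t x‖ * ‖x‖) := by
            gcongr
            exact hφ.norm_mul_norm_fderiv_le k x
    rw [abs_mul, abs_of_nonneg (S.ρ_nonneg t ht x)]
    calc _ ≤ S.ρ t x * (‖S.u t x‖ * ‖x‖ + C * (‖S.u t x‖ * ‖x‖)) :=
          mul_le_mul_of_nonneg_left ((abs_add_le _ _).trans (add_le_add h1 h2))
            (S.ρ_nonneg t ht x)
      _ = _ := by ring
  refine ⟨tendsto_integral_of_dominated_of_eventually_eq (fun k => ?_)
    ((S.int_ρux t ht).const_mul _) hle fun x => ?_, fun k =>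
    (abs_integral_le_of_abs_le ((S.int_ρux t ht).const_mul _)
      (hle k)).trans ?_⟩
  · have := (hφ.contDiff k).continuous
    have := ((hφ.contDiff k).continuous_fderiv one_ne_zero).clm_apply hu
    exact Continuous.aestronglyMeasurable (by fun_prop)
  · filter_upwards [hφ.eventually_eq x] with k hk
    simp [hk.1, hk.2]
  · rw [integral_const_mul]
    exact mul_le_mul_of_nonneg_left (integral_ρ_mul_norm_mul_norm_le ht) (by linarith)

theorem tendsto_truncF' (hγ : 1 < γ) (hφ : IsCutoffSeq φ C) (ht : t ∈ Set.Icc 0 T) :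
    Tendsto (fun k => S.truncF' (φ k) t) atTop
        (nhds (2 * S.Ek t + n * (γ - 1) * S.Ei t)) ∧
      ∀ k, |S.truncF' (φ k) t| ≤ (1 + C) * (2 * S.Ek t) + (n + C) * ((γ - 1) * S.Ei t) := by
  have hρ := (contDiff_ρ (S := S) ht).continuous
  have hu := (contDiff_u (S := S) ht).continuous
  have hp := (contDiff_pressure (S := S) ht hγ).continuous
  have hEk : 2 * S.Ek t = ∫ x, S.ρ t x * ‖S.u t x‖ ^ 2 := by
    rw [Ek]
    ring
  have hEi : (γ - 1) * S.Ei t = ∫ x, S.pressure t x := by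
    rw [Ei, ← mul_assoc, mul_one_div_cancel (by linarith), one_mul]
    rfl
  have hint : ∀ a b : ℝ, Integrable fun x =>
      a * (S.ρ t x * ‖S.u t x‖ ^ 2) + b * S.pressure t x := fun a b =>
    ((S.int_ρu2 t ht).const_mul a).add (Integrable.const_mul (S.int_p t ht) b)
  have hcomb : ∀ a b : ℝ, ∫ x, (a * (S.ρ t x * ‖S.u t x‖ ^ 2) + b * S.pressure t x)
      = a * (2 * S.Ek t) + b * ((γ - 1) * S.Ei t) := fun a b => by
    rw [hEk, hEi, ← integral_const_mul, ← integral_const_mul]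
    exact integral_add ((S.int_ρu2 t ht).const_mul a) (Integrable.const_mul (S.int_p t ht) b)
  have hle : ∀ k x, |S.ρ t x * (φ k x * ‖S.u t x‖ ^ 2
      + ⟪S.u t x, x⟫_ℝ * fderiv ℝ (φ k) x (S.u t x))
      + S.pressure t x * (n * φ k x + fderiv ℝ (φ k) x x)|
      ≤ (1 + C) * (S.ρ t x * ‖S.u t x‖ ^ 2) + (n + C) * S.pressure t x := fun k x => by
    have h1 : |φ k x * ‖S.u t x‖ ^ 2| ≤ ‖S.u t x‖ ^ 2 := by
      rw [abs_mul, abs_of_nonneg (sq_nonneg ‖S.u t x‖)]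
      exact mul_le_of_le_one_left (sq_nonneg _) (hφ.abs_le_one k x)
    have h2 : |⟪S.u t x, x⟫_ℝ * fderiv ℝ (φ k) x (S.u t x)| ≤ C * ‖S.u t x‖ ^ 2 := by
      rw [abs_mul]
      calc |⟪S.u t x, x⟫_ℝ| * |fderiv ℝ (φ k) x (S.u t x)|
          ≤ (‖S.u t x‖ * ‖x‖) * (‖fderiv ℝ (φ k) x‖ * ‖S.u t x‖) := by
            gcongr
            · exact abs_real_inner_le_norm _ _
            · exact (fderiv ℝ (φ k) x).le_opNorm _
        _ = (‖x‖ * ‖fderiv ℝ (φ k) x‖) * ‖S.u t x‖ ^ 2 := by ring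
        _ ≤ C * ‖S.u t x‖ ^ 2 := by
            gcongr
            exact hφ.norm_mul_norm_fderiv_le k x
    have h3 : |n * φ k x| ≤ (n : ℝ) := by
      rw [abs_mul, Nat.abs_cast]
      exact mul_le_of_le_one_right n.cast_nonneg (hφ.abs_le_one k x)
    have h4 : |fderiv ℝ (φ k) x x| ≤ C := by
      refine ((fderiv ℝ (φ k) x).le_opNorm x).trans ?_
      rw [mul_comm]
      exact hφ.norm_mul_norm_fderiv_le k x
    refine (abs_add_le _ _).trans ?_
    rw [abs_mul, abs_mul, abs_of_nonneg (S.ρ_nonneg t ht x), abs_of_nonneg (pressure_nonneg ht x)]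
    calc _ ≤ S.ρ t x * (‖S.u t x‖ ^ 2 + C * ‖S.u t x‖ ^ 2) + S.pressure t x * (n + C) :=
          add_le_add
            (mul_le_mul_of_nonneg_left ((abs_add_le _ _).trans (add_le_add h1 h2))
              (S.ρ_nonneg t ht x))
            (mul_le_mul_of_nonneg_left ((abs_add_le _ _).trans (add_le_add h3 h4))
              (pressure_nonneg ht x))
      _ = _ := by ring
  have hlim : 2 * S.Ek t + n * (γ - 1) * S.Ei t
      = ∫ x, (1 * (S.ρ t x * ‖S.u t x‖ ^ 2) + n * S.pressure t x) := by
    rw [hcomb]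
    ring
  rw [hlim]
  refine ⟨tendsto_integral_of_dominated_of_eventually_eq (fun k => ?_)
    (hint _ _) hle fun x => ?_, fun k =>
    (abs_integral_le_of_abs_le (hint _ _) (hle k)).trans
      (hcomb _ _).le⟩
  · have := (hφ.contDiff k).continuous
    have := ((hφ.contDiff k).continuous_fderiv one_ne_zero).clm_apply hu
    have := ((hφ.contDiff k).continuous_fderiv one_ne_zero).clm_apply continuous_id
    simp only [id] at this
    exact Continuous.aestronglyMeasurable (by fun_prop)
  · filter_upwards [hφ.eventually_eq x] with k hk
    simp [hk.1, hk.2]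
    ring

end Limits

/-- The functional `J(t)` grows at most like `(t+1)^a` whenever `a ≥ max(0, 2 − n(γ−1))`. -/
theorem rpow_neg_mul_J_le (hγ : 1 < γ) {a t : ℝ} (ha : 0 ≤ a) (haγ : 2 - n * (γ - 1) ≤ a)
    (ht : t ∈ Set.Icc 0 T) : (t + 1) ^ (-a) * S.J t ≤ S.J 0 := by
  obtain ⟨φ, C, hφ⟩ := exists_isCutoffSeq (V := EuclideanSpace ℝ (Fin n))
  have hC : 0 ≤ C := (norm_nonneg _).trans (hφ.norm_fderiv_le 0 0)
  have h0 : (0 : ℝ) ∈ Set.Icc 0 T := ⟨le_rfl, ht.1.trans ht.2⟩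
  have hsub : Set.Icc 0 t ⊆ Set.Icc 0 T := Set.Icc_subset_Icc_right ht.2
  have hsub' : Set.Ioo 0 t ⊆ Set.Ioo 0 T := Set.Ioo_subset_Ioo_right ht.2
  obtain ⟨A, hA⟩ : ∃ A, ∀ τ ∈ Set.Icc 0 T, S.G τ ≤ A := by
    obtain ⟨A, hA⟩ := isCompact_Icc.exists_bound_of_continuousOn (s := Set.Icc 0 T) (f := S.G)
      fun τ hτ => (S.hG τ hτ).continuousAt.continuousWithinAt
    exact ⟨A, fun τ hτ => (le_abs_self _).trans (hA τ hτ)⟩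
  set E₀ := S.E 0
  have hE : ∀ τ ∈ Set.Icc 0 T, S.Ek τ + S.Ei τ = E₀ := fun τ hτ => E_eq_E_zero hγ hτ
  set B := (1 + C) * (E₀ + A) + (1 + C) * (2 * E₀) + (n + C) * ((γ - 1) * E₀)
  have hbounds : ∀ τ ∈ Set.Icc 0 T, ∀ k, |S.truncG (φ k) τ| ≤ B ∧ |S.truncF (φ k) τ| ≤ B ∧
      |S.truncG' (φ k) τ| ≤ B ∧ |S.truncF' (φ k) τ| ≤ B := fun τ hτ k => by
    have hk := Ek_nonneg (S := S) hτ
    have hi := Ei_nonneg (S := S) hτ hγ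
    have hg := G_nonneg (S := S) hτ
    have hsum := hE τ hτ
    have hAτ := hA τ hτ
    have hkG : S.Ek τ + S.G τ ≤ E₀ + A := by linarith
    have hγ1 : 0 ≤ γ - 1 := by linarith
    have hnC : 0 ≤ (n : ℝ) + C := by positivity
    have hE0 : 0 ≤ E₀ := by linarith
    have hkE : S.Ek τ ≤ E₀ := by linarith
    have hiE : S.Ei τ ≤ E₀ := by linarith
    have p1 : (1 + C) * (S.Ek τ + S.G τ) ≤ (1 + C) * (E₀ + A) := by gcongr
    have p2 : (1 + C) * (2 * S.Ek τ) ≤ (1 + C) * (2 * E₀) := by gcongr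
    have p3 : (n + C) * ((γ - 1) * S.Ei τ) ≤ (n + C) * ((γ - 1) * E₀) := by gcongr
    have q1 : S.Ek τ + S.G τ ≤ (1 + C) * (S.Ek τ + S.G τ) := by
      have : 0 ≤ C * (S.Ek τ + S.G τ) := by positivity
      linarith
    have q2 : 0 ≤ (1 + C) * (2 * S.Ek τ) := by positivity
    have q3 : 0 ≤ (n + C) * ((γ - 1) * S.Ei τ) := by positivity
    have b1 := (tendsto_truncG (S := S) hφ hτ).2 k
    have b2 := (tendsto_truncF (S := S) hφ hτ).2 k
    have b3 := (tendsto_truncG' (S := S) hφ hτ).2 k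
    have b4 := (tendsto_truncF' (S := S) hγ hφ hτ).2 k
    refine ⟨?_, ?_, ?_, ?_⟩ <;> linarith
  have hJlim : ∀ τ ∈ Set.Icc 0 T, Tendsto (fun k => S.truncG (φ k) τ - (τ + 1) * S.truncF (φ k) τ
      + (τ + 1) ^ 2 * E₀) atTop (nhds (S.J τ)) := fun τ hτ => by
    rw [J, E, hE τ hτ]
    exact ((tendsto_truncG hφ hτ).1.sub ((tendsto_truncF hφ hτ).1.const_mul _)).add_const _
  have hmono := le_of_tendsto_of_tendsto_deriv_nonpos (a := 0) (b := t)
    (fa := (0 + 1) ^ (-a) * S.J 0) (fb := (t + 1) ^ (-a) * S.J t)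
    (f := fun k τ => (τ + 1) ^ (-a) * (S.truncG (φ k) τ - (τ + 1) * S.truncF (φ k) τ
      + (τ + 1) ^ 2 * E₀))
    (f' := fun k τ => -a * (τ + 1) ^ (-a - 1) * (S.truncG (φ k) τ - (τ + 1) * S.truncF (φ k) τ
        + (τ + 1) ^ 2 * E₀)
      + (τ + 1) ^ (-a) * (S.truncG' (φ k) τ - (S.truncF (φ k) τ + (τ + 1) * S.truncF' (φ k) τ)
        + 2 * (τ + 1) * E₀))
    (g := fun τ => -a * (τ + 1) ^ (-a - 1) * S.J τ
      + (τ + 1) ^ (-a) * (S.F τ - (S.F τ + (τ + 1) * (2 * S.Ek τ + n * (γ - 1) * S.Ei τ))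
        + 2 * (τ + 1) * E₀))
    (C := a * (B + (T + 1) * B + (T + 1) ^ 2 * |E₀|)
      + (B + (B + (T + 1) * B) + 2 * (T + 1) * |E₀|))
    ht.1 ?_ ?_ ?_ ?_ ?_ ((hJlim 0 h0).const_mul _) ((hJlim t ht).const_mul _)
  · simpa using hmono
  · intro k
    have hG := (continuousOn_truncG (S := S) (hφ.contDiff k).continuous
      (hφ.hasCompactSupport k)).mono hsub
    have hF := (continuousOn_truncF (S := S) (hφ.contDiff k).continuous
      (hφ.hasCompactSupport k)).mono hsub
    have hpow : ContinuousOn (fun τ : ℝ => (τ + 1) ^ (-a)) (Set.Icc 0 t) :=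
      ContinuousOn.rpow_const (by fun_prop) fun τ hτ => Or.inl (by linarith [hτ.1])
    fun_prop
  · intro k τ hτ
    have hτ1 : τ + 1 ≠ 0 := by linarith [hτ.1]
    have hlin : HasDerivAt (fun τ : ℝ => τ + 1) 1 τ := (hasDerivAt_id τ).add_const 1
    have hG := hasDerivAt_truncG (S := S) (hφ.contDiff k) (hφ.hasCompactSupport k) (hsub' hτ)
    have hF := hasDerivAt_truncF (S := S) hγ (hφ.contDiff k) (hφ.hasCompactSupport k) (hsub' hτ)
    have h := (hlin.rpow_const (p := -a) (Or.inl hτ1)).fun_mul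
      ((hG.fun_sub (hlin.fun_mul hF)).fun_add ((hlin.fun_pow 2).mul_const E₀))
    refine h.congr_deriv ?_
    push_cast
    ring
  · intro k τ hτ
    obtain ⟨b1, b2, b3, b4⟩ := hbounds τ (Set.Ioo_subset_Icc_self (hsub' hτ)) k
    have hB0 : 0 ≤ B := (abs_nonneg _).trans b1
    have hτ0 : 0 ≤ τ + 1 := by linarith [hτ.1]
    have hτT : τ + 1 ≤ T + 1 := by linarith [hτ.2, ht.2]
    have hT0 : 0 ≤ T + 1 := hτ0.trans hτT
    have r1 : (τ + 1) ^ (-a - 1) ≤ 1 :=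
      Real.rpow_le_one_of_one_le_of_nonpos (by linarith [hτ.1]) (by linarith)
    have r2 : (τ + 1) ^ (-a) ≤ 1 :=
      Real.rpow_le_one_of_one_le_of_nonpos (by linarith [hτ.1]) (by linarith)
    have r1' := Real.rpow_nonneg hτ0 (-a - 1)
    have r2' := Real.rpow_nonneg hτ0 (-a)
    have m1 : |S.truncG (φ k) τ - (τ + 1) * S.truncF (φ k) τ + (τ + 1) ^ 2 * E₀|
        ≤ B + (T + 1) * B + (T + 1) ^ 2 * |E₀| := by
      refine (abs_add_le _ _).trans (add_le_add ((abs_sub _ _).trans (add_le_add b1 ?_)) ?_)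
      · rw [abs_mul, abs_of_nonneg hτ0]
        gcongr
      · rw [abs_mul, abs_of_nonneg (sq_nonneg _)]
        gcongr
    have m2 : |S.truncG' (φ k) τ - (S.truncF (φ k) τ + (τ + 1) * S.truncF' (φ k) τ)
        + 2 * (τ + 1) * E₀| ≤ B + (B + (T + 1) * B) + 2 * (T + 1) * |E₀| := by
      refine (abs_add_le _ _).trans (add_le_add ((abs_sub _ _).trans (add_le_add b3
        ((abs_add_le _ _).trans (add_le_add b2 ?_)))) ?_)
      · rw [abs_mul, abs_of_nonneg hτ0]
        gcongr
      · rw [abs_mul, abs_of_nonneg (by positivity)]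
        gcongr
    refine (abs_add_le _ _).trans (add_le_add ?_ ?_)
    · rw [abs_mul, abs_mul, abs_neg, abs_of_nonneg ha, abs_of_nonneg r1']
      calc _ ≤ a * 1 * (B + (T + 1) * B + (T + 1) ^ 2 * |E₀|) := by gcongr
        _ = _ := by ring
    · rw [abs_mul, abs_of_nonneg r2']
      exact (mul_le_of_le_one_left (abs_nonneg _) r2).trans m2
  · intro τ hτ
    have hτ' := Set.Ioo_subset_Icc_self (hsub' hτ)
    exact ((hJlim τ hτ').const_mul _).add ((((tendsto_truncG' hφ hτ').1.sub
      ((tendsto_truncF hφ hτ').1.add ((tendsto_truncF' hγ hφ hτ').1.const_mul _))).add_const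
        _).const_mul _)
  · intro τ hτ
    have hτ' := Set.Ioo_subset_Icc_self (hsub' hτ)
    have hτ0 : 0 < τ + 1 := by linarith [hτ.1]
    have hsplit : (τ + 1) ^ (-a) = (τ + 1) ^ (-a - 1) * (τ + 1) := by
      rw [← Real.rpow_add_one hτ0.ne']
      ring_nf
    have hJ := sq_mul_Ei_le_J (S := S) hτ'
    have hX : 0 ≤ (τ + 1) ^ 2 * S.Ei τ := mul_nonneg (sq_nonneg _) (Ei_nonneg hτ' hγ)
    have hbracket : (2 - n * (γ - 1)) * ((τ + 1) ^ 2 * S.Ei τ) - a * S.J τ ≤ 0 := by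
      nlinarith [mul_le_mul_of_nonneg_right haγ hX, mul_le_mul_of_nonneg_left hJ ha]
    have heq : -a * (τ + 1) ^ (-a - 1) * S.J τ
        + (τ + 1) ^ (-a) * (S.F τ - (S.F τ + (τ + 1) * (2 * S.Ek τ + n * (γ - 1) * S.Ei τ))
          + 2 * (τ + 1) * E₀)
        = (τ + 1) ^ (-a - 1)
          * ((2 - n * (γ - 1)) * ((τ + 1) ^ 2 * S.Ei τ) - a * S.J τ) := by
      rw [hsplit, ← hE τ hτ']
      ring
    exact heq.trans_le (mul_nonpos_of_nonneg_of_nonpos (Real.rpow_nonneg hτ0.le _) hbracket)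

end FullEulerSolution

/-- **Proposition 3.6, full Euler case: upper decay of the internal energy.**
With `J(0) = G(0) − F(0) + E(0)`: if `1 < γ ≤ 1 + 2/n` then
`E_i(t) ≤ J(0)/(t+1)^{n(γ−1)}`; if `γ > 1 + 2/n` then `E_i(t) ≤ J(0)/(t+1)²`. -/
theorem FullEulerSolution.internal_energy_upper_decay
    {n : ℕ} {γ cν s₁ T : ℝ} (hn : 1 ≤ n) (hγ : 1 < γ) (hcν : 0 < cν) (hT : 0 < T)
    (S : FullEulerSolution n γ cν s₁ T) :
    (γ ≤ 1 + 2 / n →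
      ∀ t ∈ Set.Icc 0 T,
        S.Ei t ≤ (S.G 0 - S.F 0 + S.E 0) / (t + 1) ^ ((n : ℝ) * (γ - 1))) ∧
    (1 + 2 / n < γ →
      ∀ t ∈ Set.Icc 0 T,
        S.Ei t ≤ (S.G 0 - S.F 0 + S.E 0) / (t + 1) ^ 2) := by
  have hn0 : (0 : ℝ) < n := by exact_mod_cast hn
  have hJ0 : S.J 0 = S.G 0 - S.F 0 + S.E 0 := by simp [J]
  rw [← hJ0]
  refine ⟨fun hle t ht => ?_, fun hlt t ht => ?_⟩
  · have hpos : 0 < t + 1 := by linarith [ht.1]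
    have ha : (n : ℝ) * (γ - 1) ≤ 2 := by
      have : γ - 1 ≤ 2 / n := by linarith
      rwa [le_div_iff₀ hn0, mul_comm] at this
    have h := S.rpow_neg_mul_J_le hγ (a := 2 - n * (γ - 1)) (by linarith) le_rfl ht
    rw [le_div_iff₀ (Real.rpow_pos_of_pos hpos _)]
    refine le_trans ?_ h
    calc S.Ei t * (t + 1) ^ ((n : ℝ) * (γ - 1))
        = (t + 1) ^ (-(2 - n * (γ - 1))) * ((t + 1) ^ 2 * S.Ei t) := by
          rw [← mul_assoc, ← Real.rpow_natCast (t + 1) 2, ← Real.rpow_add hpos, mul_comm]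
          congr 2
          push_cast
          ring
      _ ≤ (t + 1) ^ (-(2 - n * (γ - 1))) * S.J t :=
          mul_le_mul_of_nonneg_left (sq_mul_Ei_le_J ht) (Real.rpow_nonneg hpos.le _)
  · have hpos : 0 < t + 1 := by linarith [ht.1]
    have ha : 2 - (n : ℝ) * (γ - 1) ≤ 0 := by
      have : 2 / n < γ - 1 := by linarith
      rw [div_lt_iff₀ hn0] at this
      linarith
    have h := S.rpow_neg_mul_J_le hγ le_rfl ha ht
    rw [neg_zero, Real.rpow_zero, one_mul] at h
    rw [le_div_iff₀ (by positivity), mul_comm]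
    exact (sq_mul_Ei_le_J ht).trans h
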